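/- Let c = (c_1, …, c_k) and d = (d_1, …, d_k) be lists of positive integers, and encode allowable paths by words w = (w_1, …, w_k) with each w_j ∈ {B, T, TB} subject to: w_j = B implies j = 1 or w_{j−1} ∈ {B, TB}. The integer of a word w is the product over j of m_j, where m_j = c_j if w_j = B, m_j = d_j if w_j = T, and m_j = d_j·c_j if w_j = TB; the word ends at the bottom iff w_k ∈ {B, TB}. Let E be the set of integers of words ending at the bottom and F the set of integers of words ending at the top. Then gcd(E ∪ F) divides gcd(E), and Y_{c,d} = gcd(E) / gcd(E ∪ F); equivalently gcd(E) = Y_{c,d} · gcd(E ∪ F). -/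

import Mathlib

/-- The three kinds of steps of an allowable path through the 2×k array: `B` (a
right-one move along the bottom row, visiting `c_j`), `T` (a right-one or up-right
move ending in the top row, visiting `d_j`), and `TB` (an up-right move to `d_j`
followed by a down move to `c_j`, visiting `d_j·c_j`). -/
inductive Step : Type
  | B : Step
  | T : Step
  | TB : Step
deriving DecidableEq

/-- The factor contributed in column `j` by a step, where the bottom entry is `cj` and
the top entry is `dj`. -/
def stepVal (cj dj : ℕ) : Step → ℕ
  | Step.B => cj
  | Step.T => dj
  | Step.TB => dj * cj

/-- The integer of a word: the product of the entries visited by the corresponding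
path. -/
def wordVal (c d : List ℕ) (w : List Step) : ℕ :=
  (List.zipWith (fun (p : ℕ × ℕ) s => stepVal p.1 p.2 s) (List.zip c d) w).prod

/-- A word is valid when `w_j = B` implies `j = 1` or `w_{j−1} ∈ {B, TB}` (a path can
only continue along the bottom row if it is already in the bottom row). -/
def ValidWord (w : List Step) : Prop :=
  ∀ j : ℕ, (h : j < w.length) → w.get ⟨j, h⟩ = Step.B →
    j = 0 ∨ ∃ h' : j - 1 < w.length,
      (w.get ⟨j - 1, h'⟩ = Step.B ∨ w.get ⟨j - 1, h'⟩ = Step.TB)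

/-- The word ends at the bottom row iff its last letter is `B` or `TB`. -/
def EndsBottom (w : List Step) : Prop :=
  w.getLast? = some Step.B ∨ w.getLast? = some Step.TB

/-- The word ends at the top row iff its last letter is `T`. -/
def EndsTop (w : List Step) : Prop :=
  w.getLast? = some Step.T

/-- The recursively defined quantities `Y_j`: `Y₀ = 1` and
`Y_j = gcd((c_j·Y_{j−1}) / gcd(c_j·Y_{j−1}, d_j), c_j)`. -/
def Yaux (c d : List ℕ) : ℕ → ℕ
  | 0 => 1
  | j + 1 =>
      Nat.gcd ((c.getD j 1 * Yaux c d j) / Nat.gcd (c.getD j 1 * Yaux c d j) (d.getD j 1))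
        (c.getD j 1)

/-- `Y_{c,d} := Y_k` where `k` is the common length of `c` and `d`. -/
def Ycd (c d : List ℕ) : ℕ := Yaux c d c.length

/-!
Let `e` be the gcd of the integers of the words of length `n` ending at the bottom, and `g` the
gcd over all words of length `n`. Appending a column with bottom entry `c` and top entry `d`
replaces `e` by `gcd (e * c) (g * (d * c))` and `g` by `gcd (e * c) (g * d)`. If `e = Y * g`,
these are `c * gcd Y d * g` and `gcd (c * Y) d * g`, and their ratio is the next `Y`.
-/

theorem gcd_div_gcd_mul_gcd (c d Y : ℕ) :
    Nat.gcd (c * Y / Nat.gcd (c * Y) d) c * Nat.gcd (c * Y) d = c * Nat.gcd Y d :=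
  calc Nat.gcd (c * Y / Nat.gcd (c * Y) d) c * Nat.gcd (c * Y) d
      = Nat.gcd (c * Y) (c * Nat.gcd (c * Y) d) := by
        rw [← Nat.gcd_mul_right, Nat.div_mul_cancel (Nat.gcd_dvd_left _ _)]
    _ = c * Nat.gcd Y d := by
        rw [Nat.gcd_mul_left, ← Nat.gcd_assoc, Nat.gcd_eq_left (Nat.dvd_mul_left Y c)]

theorem validWord_iff_isChain (w : List Step) :
    ValidWord w ↔ w.IsChain fun s t => t = Step.B → s ≠ Step.T := by
  have ne_T_iff (s : Step) : s ≠ Step.T ↔ s = Step.B ∨ s = Step.TB := by cases s <;> simp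
  simp only [List.isChain_iff_getElem, ne_T_iff]
  refine ⟨fun h j hj hB => ?_, fun h j hj hB => ?_⟩
  · exact ((h (j + 1) hj hB).resolve_left j.succ_ne_zero).2
  · cases j with
    | zero => exact Or.inl rfl
    | succ j => exact Or.inr ⟨j.lt_of_succ_lt hj, h j hj hB⟩

theorem validWord_append_singleton (w : List Step) (s : Step) :
    ValidWord (w ++ [s]) ↔ ValidWord w ∧ (s = Step.B → ¬EndsTop w) := by
  simp only [validWord_iff_isChain, List.isChain_append, EndsTop]
  grind

theorem endsBottom_iff_not_endsTop {w : List Step} (hw : w ≠ []) :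
    EndsBottom w ↔ ¬EndsTop w := by
  rw [EndsBottom, EndsTop, List.getLast?_eq_some_getLast hw]
  cases w.getLast hw <;> simp

theorem wordVal_append_singleton {c d : List ℕ} {w : List Step} (s : Step)
    (hc : w.length < c.length) (hd : w.length < d.length) :
    wordVal c d (w ++ [s]) =
      wordVal c d w * stepVal (c.getD w.length 1) (d.getD w.length 1) s := by
  unfold wordVal
  induction w generalizing c d with
  | nil => cases c <;> cases d <;> simp_all
  | cons t w ih => cases c <;> cases d <;> simp_all [mul_assoc]

mutual

/-- The valid words of length `n` whose path ends in the bottom row. The empty word is included,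
since every path starts at the initial entry `1` of the bottom row. -/
def bottomWords : ℕ → Finset (List Step)
  | 0 => {[]}
  | n + 1 => (bottomWords n).image (· ++ [Step.B]) ∪
      (bottomWords n ∪ topWords n).image (· ++ [Step.TB])

/-- The valid words of length `n` whose path ends in the top row. -/
def topWords : ℕ → Finset (List Step)
  | 0 => ∅
  | n + 1 => (bottomWords n ∪ topWords n).image (· ++ [Step.T])

end

theorem mem_bottomWords_and_mem_topWords (n : ℕ) (w : List Step) :
    (w ∈ bottomWords n ↔ w.length = n ∧ ValidWord w ∧ ¬EndsTop w) ∧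
      (w ∈ topWords n ↔ w.length = n ∧ ValidWord w ∧ EndsTop w) := by
  induction n generalizing w with
  | zero =>
    have hnil : ValidWord [] ∧ ¬EndsTop [] := by simp [ValidWord, EndsTop]
    grind [bottomWords, topWords]
  | succ n ih =>
    rcases w.eq_nil_or_concat' with rfl | ⟨v, s, rfl⟩
    · simp [bottomWords, topWords]
    · have endsTop_iff : EndsTop (v ++ [s]) ↔ s = Step.T := by simp [EndsTop]
      simp only [bottomWords, topWords, Finset.mem_union, Finset.mem_image,
        List.append_singleton_inj, List.length_append, List.length_singleton,
        validWord_append_singleton, endsTop_iff, ih]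
      cases s <;> grind

theorem mem_bottomWords {n : ℕ} {w : List Step} :
    w ∈ bottomWords n ↔ w.length = n ∧ ValidWord w ∧ ¬EndsTop w :=
  (mem_bottomWords_and_mem_topWords n w).1

theorem mem_topWords {n : ℕ} {w : List Step} :
    w ∈ topWords n ↔ w.length = n ∧ ValidWord w ∧ EndsTop w :=
  (mem_bottomWords_and_mem_topWords n w).2

theorem length_eq_of_mem_bottomWords_union_topWords {n : ℕ} {w : List Step}
    (hw : w ∈ bottomWords n ∪ topWords n) : w.length = n :=
  (Finset.mem_union.1 hw).elim (fun h => (mem_bottomWords.1 h).1) fun h => (mem_topWords.1 h).1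

section Gcd

variable {c d : List ℕ} {n : ℕ}

theorem gcd_image_append_singleton (hc : n < c.length) (hd : n < d.length)
    {S : Finset (List Step)} (hS : ∀ w ∈ S, w.length = n) (s : Step) :
    (S.image (· ++ [s])).gcd (wordVal c d) =
      S.gcd (wordVal c d) * stepVal (c.getD n 1) (d.getD n 1) s := by
  have hval : ∀ w ∈ S, wordVal c d (w ++ [s]) =
      wordVal c d w * stepVal (c.getD n 1) (d.getD n 1) s := by
    intro w hw
    obtain rfl := hS w hw
    exact wordVal_append_singleton s hc hd
  rw [Finset.gcd_image, Function.comp_def, Finset.gcd_congr rfl hval, Finset.gcd_mul_right,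
    normalize_eq]

theorem gcd_bottomWords_succ (hc : n < c.length) (hd : n < d.length) :
    (bottomWords (n + 1)).gcd (wordVal c d) =
      Nat.gcd ((bottomWords n).gcd (wordVal c d) * c.getD n 1)
        ((bottomWords n ∪ topWords n).gcd (wordVal c d) * (d.getD n 1 * c.getD n 1)) := by
  rw [bottomWords, Finset.gcd_union,
    gcd_image_append_singleton hc hd fun _ hw => (mem_bottomWords.1 hw).1,
    gcd_image_append_singleton hc hd fun _ => length_eq_of_mem_bottomWords_union_topWords,
    gcd_eq_nat_gcd, stepVal, stepVal]

theorem gcd_bottomWords_union_topWords_succ (hc : n < c.length) (hd : n < d.length) :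
    (bottomWords (n + 1) ∪ topWords (n + 1)).gcd (wordVal c d) =
      Nat.gcd ((bottomWords n).gcd (wordVal c d) * c.getD n 1)
        ((bottomWords n ∪ topWords n).gcd (wordVal c d) * d.getD n 1) := by
  rw [Finset.gcd_union, gcd_bottomWords_succ hc hd, topWords,
    gcd_image_append_singleton hc hd fun _ => length_eq_of_mem_bottomWords_union_topWords,
    gcd_eq_nat_gcd, stepVal, Nat.gcd_assoc, ← mul_assoc, Nat.gcd_mul_right_left]

theorem gcd_bottomWords (hc : n ≤ c.length) (hd : n ≤ d.length) :
    (bottomWords n).gcd (wordVal c d) =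
      Yaux c d n * (bottomWords n ∪ topWords n).gcd (wordVal c d) := by
  induction n with
  | zero => simp [bottomWords, topWords, Yaux]
  | succ n ih =>
    rw [gcd_bottomWords_succ hc hd, gcd_bottomWords_union_topWords_succ hc hd,
      ih (Nat.le_of_succ_le hc) (Nat.le_of_succ_le hd), Yaux]
    generalize (bottomWords n ∪ topWords n).gcd (wordVal c d) = g
    generalize c.getD n 1 = C, d.getD n 1 = D, Yaux c d n = Y
    calc Nat.gcd (Y * g * C) (g * (D * C))
        = C * Nat.gcd Y D * g := by
          rw [← Nat.gcd_mul_left, ← Nat.gcd_mul_right]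
          ring_nf
      _ = Nat.gcd (C * Y / Nat.gcd (C * Y) D) C * (Nat.gcd (C * Y) D * g) := by
          rw [← gcd_div_gcd_mul_gcd, mul_assoc]
      _ = Nat.gcd (C * Y / Nat.gcd (C * Y) D) C * Nat.gcd (Y * g * C) (g * D) := by
          rw [← Nat.gcd_mul_right (C * Y) g D]
          ring_nf

end Gcd

/-- Let `E` be the set of integers of valid length-`k` words ending at the bottom and
`F` the set of integers of valid length-`k` words ending at the top.  Then
`gcd(E ∪ F)` divides `gcd(E)`, and `gcd(E) = Y_{c,d} · gcd(E ∪ F)`. -/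
theorem gcd_paths_eq_Ycd (k : ℕ) (c d : List ℕ) (hck : c.length = k) (hdk : d.length = k)
    (hc : ∀ x ∈ c, 0 < x) (hd : ∀ x ∈ d, 0 < x)
    (E F : Finset ℕ)
    (hE : ∀ m, m ∈ E ↔ ∃ w : List Step,
      w.length = k ∧ ValidWord w ∧ EndsBottom w ∧ wordVal c d w = m)
    (hF : ∀ m, m ∈ F ↔ ∃ w : List Step,
      w.length = k ∧ ValidWord w ∧ EndsTop w ∧ wordVal c d w = m) :
    Finset.gcd (E ∪ F) id ∣ Finset.gcd E id ∧
      Finset.gcd E id = Ycd c d * Finset.gcd (E ∪ F) id := by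
  refine ⟨Finset.gcd_mono Finset.subset_union_left, ?_⟩
  rcases k.eq_zero_or_pos with rfl | hk
  · have hE_empty : E = ∅ := by ext; simp +contextual [hE, EndsBottom]
    have hF_empty : F = ∅ := by ext; simp +contextual [hF, EndsTop]
    simp [hE_empty, hF_empty]
  · have hE_image : E = (bottomWords k).image (wordVal c d) := by
      ext m
      have hbottom : ∀ w : List Step, w.length = k → (EndsBottom w ↔ ¬EndsTop w) :=
        fun w hw => endsBottom_iff_not_endsTop (List.length_pos_iff.1 (hw ▸ hk))
      grind [mem_bottomWords]
    have hF_image : F = (topWords k).image (wordVal c d) := by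
      ext m
      grind [mem_topWords]
    rw [hE_image, hF_image, ← Finset.image_union, Finset.gcd_image, Finset.gcd_image,
      Function.id_comp, Ycd, hck]
    exact gcd_bottomWords hck.ge hdk.ge
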